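/- arXiv:2602.09530 — 2 statements merged into one kernel-verified Lean document; each statement's English description precedes it below -/
import Mathlib

section
/- Let p be a real polynomial of degree d ≥ 1 with leading coefficient K. Then the maximum absolute value of p on the interval [−1, 1] is bounded below by |K|·2^{−(d−1)}, i.e., sup_{t ∈ [−1,1]} |p(t)| ≥ |K|·2^{1−d}. Equivalently, among all monic real polynomials of degree d, the scaled Chebyshev polynomial 2^{1−d}·T_d minimizes the sup norm on [−1, 1]. -/
/-!
The bound is the rescaled form of the extremal property of `T_d` in Mathlib: a polynomial of degree
at most `d` bounded by `1` in absolute value on `[-1, 1]` has `d`-th coefficient at most `2 ^ (d-1)`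
(`Polynomial.Chebyshev.coeff_le_of_forall_abs_le_one`, obtained by Lagrange interpolation at the
extremal points of `T_d`, where `T_d` alternates between `1` and `-1`). If `M` is the supremum of
`|p|` on `[-1, 1]`, this applies to `± p / B` for every `B > M`. Taking `B` strictly above `M` makes
it positive without having to show that `M` itself is nonzero.
-/

/-- The extremal property of the Chebyshev polynomials for an arbitrary positive bound `B`. -/
lemma coeff_le_of_forall_abs_le {p : Polynomial ℝ} {d : ℕ} (hdeg : p.degree ≤ d) {B : ℝ}
    (hB : 0 < B) (hp : ∀ x ∈ Set.Icc (-1 : ℝ) 1, |p.eval x| ≤ B) :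
    p.coeff d ≤ 2 ^ (d - 1) * B := by
  have h := Polynomial.Chebyshev.coeff_le_of_forall_abs_le_one (n := d)
    (P := Polynomial.C B⁻¹ * p) ?_ ?_
  · rwa [Polynomial.coeff_C_mul, inv_mul_le_iff₀ hB, mul_comm] at h
  · rwa [Polynomial.degree_C_mul (inv_ne_zero hB.ne')]
  · intro x hx
    rw [Polynomial.eval_mul, Polynomial.eval_C, abs_mul, abs_of_pos (inv_pos.mpr hB),
      inv_mul_le_iff₀ hB, mul_one]
    exact hp x hx


/-- **Chebyshev minimal-norm bound.**
For a real polynomial `p` of degree `d ≥ 1` with leading coefficient `K`, the maximum of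
`|p|` over `[-1, 1]` is at least `|K| · 2^{1-d}`. -/
theorem chebyshev_minimal_norm_bound
    (p : Polynomial ℝ) (d : ℕ) (hd : 1 ≤ d) (hdeg : p.degree = (d : ℕ))
    (K : ℝ) (hK : K = p.leadingCoeff) :
    |K| * (2 : ℝ) ^ ((1 : ℤ) - (d : ℤ))
      ≤ sSup ((fun t => |p.eval t|) '' Set.Icc (-1 : ℝ) 1) := by
  have hbdd : BddAbove ((fun t => |p.eval t|) '' Set.Icc (-1 : ℝ) 1) :=
    (isCompact_Icc.image p.continuous.abs).bddAbove
  have hle : ∀ x ∈ Set.Icc (-1 : ℝ) 1,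
      |p.eval x| ≤ sSup ((fun t => |p.eval t|) '' Set.Icc (-1 : ℝ) 1) :=
    fun x hx => le_csSup hbdd ⟨x, hx, rfl⟩
  refine le_of_forall_gt_imp_ge_of_dense fun B hB => ?_
  have hB0 : 0 < B := ((abs_nonneg _).trans (hle 0 (by simp))).trans_lt hB
  have hpB : ∀ x ∈ Set.Icc (-1 : ℝ) 1, |p.eval x| ≤ B := fun x hx => (hle x hx).trans hB.le
  have hKd : K = p.coeff d := by
    rw [hK, Polynomial.leadingCoeff, Polynomial.natDegree_eq_of_degree_eq_some hdeg]
  have hKB : |K| ≤ 2 ^ (d - 1) * B := by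
    rw [hKd, abs_le']
    refine ⟨coeff_le_of_forall_abs_le hdeg.le hB0 hpB, ?_⟩
    rw [← Polynomial.coeff_neg]
    exact coeff_le_of_forall_abs_le (by rw [Polynomial.degree_neg, hdeg]) hB0
      fun x hx => by simpa using hpB x hx
  have hpow : (2 : ℝ) ^ ((1 : ℤ) - (d : ℤ)) = (2 ^ (d - 1))⁻¹ := by
    rw [← zpow_natCast, ← zpow_neg, Nat.cast_sub hd, Nat.cast_one, neg_sub]
  rwa [hpow, mul_inv_le_iff₀ (by positivity), mul_comm B]
end

section
/- Let 0 < a < b, let d ≥ 1, let θ(λ) = (2λ − (a+b))/(b−a), and set θ₀ = θ(0) = −(a+b)/(b−a), so that θ₀ < −1 and T_d(θ₀) ≠ 0. Define the Chebyshev residual polynomial R_d(λ) = T_d(θ(λ))/T_d(θ₀). Then R_d(0) = 1, so that (1 − R_d(λ))/λ is a polynomial q* of degree at most d − 1, and for every real polynomial q of degree at most d − 1, max_{λ ∈ [a,b]} |1 − λ·q(λ)| ≥ 1/|T_d(θ₀)| = max_{λ ∈ [a,b]} |1 − λ·q*(λ)|. Hence 1 − λ·q*(λ) = R_d(λ) solves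 the minimax problem min_{q ∈ P_{d−1}} max_{λ ∈ [a,b]} |1 − λ·q(λ)|. -/
/-!
Composing with an affine map carries `[a, b]` to `[-1, 1]` and `0` to a point outside `[-1, 1]`.
Among polynomials of degree at most `d` bounded by `1` on `[-1, 1]`, `T_d` is the largest at every
point `x ≥ 1`: this is `eval_iterate_derivative_le_of_forall_abs_le_one` with no derivative taken.
A residual `1 - λ q(λ)` takes the value `1` at `0`, so if it is bounded by `K > 0` on `[a, b]`, then
dividing it by `K` gives `1 / K ≤ |T_d(θ₀)|`, which is `one_div_le_of_residual_le`.

The bound is attained by `T_d(θ(λ)) / T_d(θ₀)`, whose absolute value on `[a, b]` is at most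
`1 / |T_d(θ₀)|`, with equality at `λ = b`, where `θ(b) = 1`.
-/

open Polynomial Polynomial.Chebyshev

lemma abs_eval_T_neg (n : ℤ) (x : ℝ) :
    |(Chebyshev.T ℝ n).eval (-x)| = |(Chebyshev.T ℝ n).eval x| := by
  simp [T_eval_neg, abs_mul]

/-- The lower bound for a polynomial of degree at most `d` normalized by `p(0) = 1`. The point
`-θ₀ = (a + b) / (b - a)` is the image of `0` under the decreasing affine map from `[a, b]` onto
`[-1, 1]`. -/
lemma one_div_le_of_residual_le {a b : ℝ} (ha : 0 < a) (hab : a < b) {d : ℕ} {p : ℝ[X]}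
    (hdeg : p.natDegree ≤ d) (h0 : p.eval 0 = 1) {K : ℝ} (hK : 0 < K)
    (hp : ∀ x ∈ Set.Icc a b, |p.eval x| ≤ K) :
    1 / |(Chebyshev.T ℝ (d : ℤ)).eval (-(a + b) / (b - a))| ≤ K := by
  have hba : 0 < b - a := sub_pos.mpr hab
  have ht : 1 ≤ (a + b) / (b - a) := by rw [le_div_iff₀ hba]; linarith
  set P : ℝ[X] := C K⁻¹ * p.comp (C (-((b - a) / 2)) * X + C ((a + b) / 2)) with hP
  have heval (t : ℝ) : P.eval t = K⁻¹ * p.eval (-((b - a) / 2) * t + (a + b) / 2) := by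
    simp [hP]
  have hPdeg : P.degree ≤ d := by
    refine natDegree_le_iff_degree_le.mp ((natDegree_C_mul_le _ _).trans ?_)
    rw [natDegree_comp]
    exact (Nat.mul_le_mul hdeg natDegree_linear_le).trans_eq (mul_one d)
  have hbnd : ∀ t ∈ Set.Icc (-1 : ℝ) 1, |P.eval t| ≤ 1 := by
    rintro t ⟨h1, h2⟩
    rw [heval, abs_mul, abs_of_pos (inv_pos.mpr hK), inv_mul_le_iff₀ hK, mul_one]
    exact hp _ ⟨by nlinarith, by nlinarith⟩
  have key := eval_iterate_derivative_le_of_forall_abs_le_one (k := 0) ht hPdeg hbnd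
  have hz : -((b - a) / 2) * ((a + b) / (b - a)) + (a + b) / 2 = 0 := by
    field_simp
    ring
  simp only [Function.iterate_zero, id_eq, heval, hz, h0, mul_one] at key
  rw [neg_div, abs_eval_T_neg, one_div]
  exact inv_le_of_inv_le₀ hK (key.trans (le_abs_self _))

/-- **The Chebyshev residual polynomial solves the minimax problem for linear solvers.**
With `0 < a < b`, `θ(λ) = (2λ-(a+b))/(b-a)`, `θ₀ = θ(0) = -(a+b)/(b-a)`, we have
`θ₀ < -1`, `T_d(θ₀) ≠ 0`, and `R_d(λ) = T_d(θ(λ))/T_d(θ₀)` satisfies `R_d(0) = 1`, so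
`(1 - R_d(λ))/λ` is a polynomial `q*` of degree ≤ `d-1` whose residual attains the minimax
value `1/|T_d(θ₀)|`, which lower-bounds the residual of every polynomial of degree ≤ `d-1`. -/
theorem chebyshev_residual_minimax
    (a b : ℝ) (ha : 0 < a) (hab : a < b) (d : ℕ) (hd : 1 ≤ d)
    (θ : ℝ → ℝ) (hθ : ∀ lam : ℝ, θ lam = (2 * lam - (a + b)) / (b - a))
    (θ₀ : ℝ) (hθ₀ : θ₀ = -(a + b) / (b - a)) :
    θ₀ < -1 ∧
    (Chebyshev.T ℝ (d : ℤ)).eval θ₀ ≠ 0 ∧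
    (Chebyshev.T ℝ (d : ℤ)).eval (θ 0) / (Chebyshev.T ℝ (d : ℤ)).eval θ₀ = 1 ∧
    ∃ qstar : Polynomial ℝ, qstar.natDegree ≤ d - 1 ∧
      (∀ x : ℝ, 1 - x * qstar.eval x
          = (Chebyshev.T ℝ (d : ℤ)).eval (θ x) / (Chebyshev.T ℝ (d : ℤ)).eval θ₀) ∧
      sSup ((fun x => |1 - x * qstar.eval x|) '' Set.Icc a b)
        = 1 / |(Chebyshev.T ℝ (d : ℤ)).eval θ₀| ∧
      ∀ q : Polynomial ℝ, q.natDegree ≤ d - 1 →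
        1 / |(Chebyshev.T ℝ (d : ℤ)).eval θ₀|
          ≤ sSup ((fun x => |1 - x * q.eval x|) '' Set.Icc a b) := by
  have hba : 0 < b - a := sub_pos.mpr hab
  have hlt : θ₀ < -1 := by rw [hθ₀, div_lt_iff₀ hba]; linarith
  have hT : (Chebyshev.T ℝ (d : ℤ)).eval θ₀ ≠ 0 := by
    have := one_le_abs_eval_T_real (d : ℤ) (x := θ₀) (by rw [abs_of_neg] <;> linarith)
    exact abs_pos.mp (by linarith)
  have hθz : θ 0 = θ₀ := by rw [hθ, hθ₀]; ring
  set c := (Chebyshev.T ℝ (d : ℤ)).eval θ₀ with hc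
  refine ⟨hlt, hT, by rw [hθz, div_self hT], ?_⟩
  set p : ℝ[X] := 1 - C c⁻¹ *
    (Chebyshev.T ℝ (d : ℤ)).comp (C (2 / (b - a)) * X + C (-(a + b) / (b - a))) with hp
  have hpeval (x : ℝ) : p.eval x = 1 - (Chebyshev.T ℝ (d : ℤ)).eval (θ x) / c := by
    have : θ x = 2 / (b - a) * x + -(a + b) / (b - a) := by rw [hθ]; ring
    simp [hp, this, div_eq_inv_mul]
  have hp0 : p.coeff 0 = 0 := by
    rw [coeff_zero_eq_eval_zero, hpeval, hθz, div_self hT, sub_self]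
  have hpdeg : p.natDegree ≤ d := by
    refine (natDegree_sub_le _ _).trans (max_le (by simp) ((natDegree_C_mul_le _ _).trans ?_))
    rw [natDegree_comp, natDegree_T, Int.natAbs_natCast]
    exact (Nat.mul_le_mul le_rfl natDegree_linear_le).trans_eq (mul_one d)
  -- As `p(0) = 0`, removing the constant term of `p` and dividing by `X` divides `p` exactly.
  have hres (x : ℝ) : 1 - x * p.divX.eval x = (Chebyshev.T ℝ (d : ℤ)).eval (θ x) / c := by
    have h := congrArg (eval x) (X_mul_divX_add p)
    rw [hp0, C_0, add_zero, eval_mul, eval_X, hpeval] at h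
    rw [h]
    ring
  refine ⟨p.divX, ?_, hres, ?_, ?_⟩
  · rw [natDegree_divX_eq_natDegree_tsub_one]
    exact Nat.sub_le_sub_right hpdeg 1
  · refine IsGreatest.csSup_eq ⟨⟨b, Set.right_mem_Icc.mpr hab.le, ?_⟩, ?_⟩
    · have hb : θ b = 1 := by
        rw [hθ, div_eq_one_iff_eq hba.ne']
        ring
      simp only [hres, hb, abs_div, T_eval_one, abs_one]
    · rintro _ ⟨x, ⟨hx1, hx2⟩, rfl⟩
      simp only [hres, abs_div]
      gcongr
      refine abs_eval_T_real_le_one _ ?_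
      rw [hθ, abs_le, le_div_iff₀ hba, div_le_iff₀ hba]
      constructor <;> linarith
  · intro q hq
    -- The supremum `M` may be `0` a priori, so the bound is proved for every `K > M`.
    refine le_of_forall_gt_imp_ge_of_dense fun K hMK => ?_
    have hbdd : BddAbove ((fun x => |1 - x * q.eval x|) '' Set.Icc a b) :=
      (isCompact_Icc.image (by fun_prop)).bddAbove
    have hle : ∀ x ∈ Set.Icc a b, |1 - x * q.eval x| ≤ K := fun x hx =>
      (le_csSup hbdd ⟨x, hx, rfl⟩).trans hMK.le
    have hK : 0 < K :=
      ((abs_nonneg _).trans (le_csSup hbdd ⟨a, Set.left_mem_Icc.mpr hab.le, rfl⟩)).trans_lt hMK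
    rw [hc, hθ₀]
    refine one_div_le_of_residual_le ha hab (p := 1 - X * q) ?_ (by simp) hK (by simpa using hle)
    refine (natDegree_sub_le _ _).trans (max_le (by simp) (natDegree_mul_le.trans ?_))
    rw [natDegree_X]
    omega
end
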